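/- Let G be a connected simple graph on a finite nonempty linearly ordered vertex type V with oriented incidence matrix D, and let T be a spanning tree of G. If x and y are integer 1-chains with equal boundaries, D·x = D·y, and x and y agree on every edge of G not in T, then x = y. -/

import Mathlib

open SimpleGraph Matrix

/-- The oriented incidence matrix of a simple graph on a linearly ordered vertex type:
the column of an edge with endpoints `a < b` has `+1` in row `b`, `-1` in row `a`,
and `0` elsewhere. -/
def orientedIncMat {V : Type*} [LinearOrder V] (G : SimpleGraph V) :
    Matrix V G.edgeSet ℤ := fun v e =>
  (if v = (e : Sym2 V).sup then 1 else 0) - (if v = (e : Sym2 V).inf then 1 else 0)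

/-- The coboundary of a 0-cochain `φ` on an edge is the difference of its endpoint values. -/
theorem vecMul_orientedIncMat {V : Type*} [Fintype V] [LinearOrder V] (G : SimpleGraph V)
    (φ : V → ℤ) (e : G.edgeSet) :
    (φ ᵥ* orientedIncMat G) e = φ (e : Sym2 V).sup - φ (e : Sym2 V).inf := by
  simp [vecMul, dotProduct, orientedIncMat, mul_sub, Finset.sum_sub_distrib]

/-- A cycle supported on the edges of an acyclic graph vanishes. -/
theorem eq_zero_of_boundary_eq_zero_of_support_acyclic {V : Type*} [Fintype V] [LinearOrder V]
    {G T : SimpleGraph V} [Fintype G.edgeSet] (hT : T.IsAcyclic) {z : G.edgeSet → ℤ}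
    (hb : orientedIncMat G *ᵥ z = 0)
    (hz : ∀ e : G.edgeSet, (e : Sym2 V) ∉ T.edgeSet → z e = 0) : z = 0 := by
  classical
  funext e
  by_cases he : (e : Sym2 V) ∈ T.edgeSet
  swap
  · exact hz e he
  -- Pair the boundary with the indicator of one side of the cut that `e` defines in `T`.
  let φ : V → ℤ := fun v ↦
    if (T.deleteEdges {(e : Sym2 V)}).Reachable (e : Sym2 V).inf v then 1 else 0
  have mk_inf_sup (f : Sym2 V) : s(f.inf, f.sup) = f := by
    induction f with | _ a b => rcases le_total a b with h | h <;> simp [h, Sym2.eq_swap]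
  have hpair : ∑ f : G.edgeSet, (φ (f : Sym2 V).sup - φ (f : Sym2 V).inf) * z f = 0 := by
    have h := dotProduct_mulVec φ (orientedIncMat G) z
    rw [hb, dotProduct_zero] at h
    simpa [dotProduct, vecMul_orientedIncMat] using h.symm
  rw [Finset.sum_eq_single e] at hpair
  · have hbridge : ¬ (T.deleteEdges {(e : Sym2 V)}).Reachable
        (e : Sym2 V).inf (e : Sym2 V).sup := by
      have h := isAcyclic_iff_forall_isBridge.mp hT he
      rw [← mk_inf_sup e, isBridge_iff, mk_inf_sup] at h
      exact h
    simpa [φ, hbridge] using hpair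
  · intro f _ hfe
    by_cases hf : (f : Sym2 V) ∈ T.edgeSet
    · have hadj : (T.deleteEdges {(e : Sym2 V)}).Adj (f : Sym2 V).inf (f : Sym2 V).sup := by
        rw [← mem_edgeSet, mk_inf_sup, edgeSet_deleteEdges]
        exact ⟨hf, fun h ↦ hfe (Subtype.ext h)⟩
      have hiff : (T.deleteEdges {(e : Sym2 V)}).Reachable (e : Sym2 V).inf (f : Sym2 V).sup ↔
          (T.deleteEdges {(e : Sym2 V)}).Reachable (e : Sym2 V).inf (f : Sym2 V).inf :=
        ⟨fun h ↦ h.trans hadj.reachable.symm, fun h ↦ h.trans hadj.reachable⟩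
      simp [φ, hiff]
    · rw [hz f hf, mul_zero]
  · simp

theorem eq_of_boundary_eq_of_agree_off_tree {V : Type*} [Fintype V] [Nonempty V]
    [LinearOrder V] (G T : SimpleGraph V) [DecidableRel G.Adj] (hG : G.Connected)
    (hTG : T ≤ G) (hT : T.IsTree) (x y : G.edgeSet → ℤ)
    (hb : orientedIncMat G *ᵥ x = orientedIncMat G *ᵥ y)
    (hagree : ∀ e : G.edgeSet, (e : Sym2 V) ∉ T.edgeSet → x e = y e) :
    x = y := by
  refine sub_eq_zero.mp (eq_zero_of_boundary_eq_zero_of_support_acyclic hT.isAcyclic ?_ ?_)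
  · rw [mulVec_sub, hb, sub_self]
  · exact fun e he ↦ sub_eq_zero.mpr (hagree e he)
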